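/- With the notation of the context, for every k ≥ 0 the sequence t₁,…,t_r is a regular sequence on the R[t₁,…,t_r]-module M_k: for each 1 ≤ i ≤ r, multiplication by t_i is injective on the quotient M_k/(t₁,…,t_{i−1})M_k, and M_k/(t₁,…,t_r)M_k ≠ 0. -/

import Mathlib

noncomputable section

open Finsupp

/-- Index set for the basis of `F_k B_f`: multi-indices `β ∈ ℕ^r` with `|β| ≤ k`. -/
abbrev Idx (r k : ℕ) : Type := {β : Fin r → ℕ // (∑ i, β i) ≤ k}

/-- `F_k B_f` modeled as the free `R`-module with basis `{e_β : |β| ≤ k}`. -/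
abbrev Mk (R : Type*) [CommRing R] (r k : ℕ) : Type _ := Idx r k →₀ R

variable (R : Type*) [CommRing R] (r : ℕ) (f : Fin r → R)

/-- The operator `t_i` on `M_k` : `h e_β ↦ fᵢ h e_β - βᵢ h e_{β-eᵢ}`. -/
def tOp (k : ℕ) (i : Fin r) : Mk R r k →ₗ[R] Mk R r k :=
  Finsupp.lift (Mk R r k) R (Idx r k) fun β =>
    f i • Finsupp.single β (1 : R)
      - (β.1 i) • Finsupp.single
          (⟨β.1 - Pi.single i 1,
            le_trans (Finset.sum_le_sum fun _ _ => Nat.sub_le _ _) β.2⟩ : Idx r k) (1 : R)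

/-- The submodule `(t₁,…,t_{i-1}) M_k` of `M_k`. -/
def partialImage (k : ℕ) (i : Fin r) : Submodule R (Mk R r k) :=
  ⨆ j : Fin r, ⨆ _ : j < i, LinearMap.range (tOp R r f k j)

/-!
The order filtration gives exact sequences `0 → M_k → M_{k+1} → gr_{k+1} → 0`. The correction term
`β_i e_{β-e_i}` of `t_i` has lower order, so `t_i` acts on the free `R`-module `gr_{k+1}` as
multiplication by `f_i`, and `t₁,…,t_r` is weakly regular there. If a commuting family is regular on
the kernel and weakly regular on the quotient of an extension, it is regular on the extension; the
result follows by induction on `k`, starting from `M_0 = R`.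
-/

section RegularFamily

variable {A ι M M' M'' : Type*} [Ring A] [AddCommGroup M] [Module A M]
  [AddCommGroup M'] [Module A M'] [AddCommGroup M''] [Module A M'']

/-- The submodule `∑_{i ∈ s} T_i M`; when the `T_i` commute and `s = {i | i < n}`, this is
`(T₁,…,T_{n-1}) M`. -/
def rangeSup (T : ι → Module.End A M) (s : Set ι) : Submodule A M :=
  ⨆ i ∈ s, LinearMap.range (T i)

/-- The family `T` is weakly regular on `M`: each `T_i` is injective on `M / ∑_{j < i} T_j M`. -/
def IsWeaklyRegularFamily [Preorder ι] (T : ι → Module.End A M) : Prop :=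
  ∀ i x, T i x ∈ rangeSup T (Set.Iio i) → x ∈ rangeSup T (Set.Iio i)

/-- The family `T` is regular on `M`: it is weakly regular and `M / ∑ T_i M ≠ 0`. -/
structure IsRegularFamily [Preorder ι] (T : ι → Module.End A M) : Prop where
  isWeaklyRegularFamily : IsWeaklyRegularFamily T
  rangeSup_univ_ne_top : rangeSup T Set.univ ≠ ⊤

variable {T : ι → Module.End A M} {T' : ι → Module.End A M'} {T'' : ι → Module.End A M''}
  {φ : M' →ₗ[A] M} {ψ : M →ₗ[A] M''} {s : Set ι}

theorem apply_mem_rangeSup {i : ι} (hi : i ∈ s) (x : M) : T i x ∈ rangeSup T s :=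
  le_iSup₂ (f := fun i (_ : i ∈ s) => LinearMap.range (T i)) i hi (LinearMap.mem_range_self _ x)

theorem rangeSup_insert (i : ι) :
    rangeSup T (insert i s) = LinearMap.range (T i) ⊔ rangeSup T s :=
  iSup_insert

theorem map_mem_rangeSup (hψT : ∀ i x, ψ (T i x) = T'' i (ψ x)) {x : M}
    (hx : x ∈ rangeSup T s) : ψ x ∈ rangeSup T'' s := by
  suffices h : rangeSup T s ≤ (rangeSup T'' s).comap ψ from h hx
  refine iSup₂_le fun i hi => ?_
  rintro _ ⟨y, rfl⟩
  rw [Submodule.mem_comap, hψT]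
  exact apply_mem_rangeSup hi (ψ y)

theorem apply_mem_rangeSup_of_mem (hT : ∀ i j, Commute (T i) (T j)) (i : ι) {x : M}
    (hx : x ∈ rangeSup T s) : T i x ∈ rangeSup T s :=
  map_mem_rangeSup (fun j => LinearMap.congr_fun (hT i j).eq) hx

theorem map_rangeSup_of_surjective (hψ : Function.Surjective ψ)
    (hψT : ∀ i x, ψ (T i x) = T'' i (ψ x)) : (rangeSup T s).map ψ = rangeSup T'' s := by
  refine le_antisymm ?_ (iSup₂_le fun i hi => ?_)
  · rintro _ ⟨x, hx, rfl⟩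
    exact map_mem_rangeSup hψT hx
  · rintro _ ⟨y, rfl⟩
    obtain ⟨x, rfl⟩ := hψ y
    exact ⟨T i x, apply_mem_rangeSup hi x, hψT i x⟩

theorem exists_mem_rangeSup_add_of_map_mem (hψ : Function.Surjective ψ)
    (hex : Function.Exact φ ψ) (hψT : ∀ i x, ψ (T i x) = T'' i (ψ x)) {x : M}
    (hx : ψ x ∈ rangeSup T'' s) : ∃ y ∈ rangeSup T s, ∃ z, x = y + φ z := by
  rw [← map_rangeSup_of_surjective hψ hψT] at hx
  obtain ⟨y, hy, hyx⟩ := hx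
  obtain ⟨z, hz⟩ := (hex (x - y)).1 (by rw [map_sub, hyx, sub_self])
  exact ⟨y, hy, z, by rw [hz, add_sub_cancel]⟩

section Extension

variable [LinearOrder ι] (hT : ∀ i j, Commute (T i) (T j)) (hφ : Function.Injective φ)
  (hψ : Function.Surjective ψ) (hex : Function.Exact φ ψ)
  (hφT : ∀ i x, φ (T' i x) = T i (φ x)) (hψT : ∀ i x, ψ (T i x) = T'' i (ψ x))

include hT hφ hψ hex hφT hψT

/-- Injectivity of `M' / ∑_{i ∈ s} T'_i M' → M / ∑_{i ∈ s} T_i M`. -/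
theorem IsWeaklyRegularFamily.mem_rangeSup_of_map_mem (hT'' : IsWeaklyRegularFamily T'')
    (hfin : s.Finite) (hlow : IsLowerSet s) {z : M'} (hz : φ z ∈ rangeSup T s) :
    z ∈ rangeSup T' s := by
  lift s to Finset ι using hfin
  induction s using Finset.induction_on_max generalizing z with
  | empty =>
    have hφz : φ z = 0 := by simpa [rangeSup] using hz
    rw [(map_eq_zero_iff φ hφ).1 hφz]
    exact zero_mem _
  | insert n s hlt ih =>
    have hIio : (s : Set ι) = Set.Iio n := by
      refine Set.Subset.antisymm hlt fun j hj => ?_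
      have hjs : j ∈ insert n s := hlow hj.le (Finset.mem_insert_self n s)
      exact Finset.mem_of_mem_insert_of_ne hjs hj.ne
    rw [Finset.coe_insert, rangeSup_insert] at hz ⊢
    obtain ⟨_, ⟨x, rfl⟩, m, hm, hxm⟩ := Submodule.mem_sup.1 hz
    have hψx : T'' n (ψ x) ∈ rangeSup T'' s := by
      have hsum : T'' n (ψ x) + ψ m = 0 := by
        rw [← hψT, ← map_add, hxm, hex.apply_apply_eq_zero]
      rw [eq_neg_of_add_eq_zero_left hsum]
      exact neg_mem (map_mem_rangeSup hψT hm)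
    obtain ⟨y, hy, w, rfl⟩ : ∃ y ∈ rangeSup T s, ∃ w, x = y + φ w := by
      refine exists_mem_rangeSup_add_of_map_mem hψ hex hψT ?_
      rw [hIio] at hψx ⊢
      exact hT'' n _ hψx
    have hzw : z - T' n w ∈ rangeSup T' s := by
      refine ih (hIio ▸ isLowerSet_Iio n) ?_
      have hφzw : φ (z - T' n w) = T n y + m := by
        rw [map_sub, hφT, ← hxm, map_add]
        abel
      rw [hφzw]
      exact add_mem (apply_mem_rangeSup_of_mem hT n hy) hm
    rw [← add_sub_cancel (T' n w) z]
    exact Submodule.add_mem_sup (LinearMap.mem_range_self _ w) hzw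

variable [Finite ι]

theorem IsWeaklyRegularFamily.of_exact (hT' : IsWeaklyRegularFamily T')
    (hT'' : IsWeaklyRegularFamily T'') : IsWeaklyRegularFamily T := by
  intro i x hx
  obtain ⟨y, hy, z, rfl⟩ := exists_mem_rangeSup_add_of_map_mem hψ hex hψT
    (hT'' i _ (hψT i x ▸ map_mem_rangeSup hψT hx))
  rw [map_add, add_mem_cancel_left (apply_mem_rangeSup_of_mem hT i hy), ← hφT] at hx
  have hTz : T' i z ∈ rangeSup T' (Set.Iio i) :=
    hT''.mem_rangeSup_of_map_mem hT hφ hψ hex hφT hψT (Set.toFinite _) (isLowerSet_Iio i) hx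
  exact add_mem hy (map_mem_rangeSup hφT (hT' i z hTz))

theorem IsRegularFamily.of_exact (hT' : IsRegularFamily T') (hT'' : IsWeaklyRegularFamily T'') :
    IsRegularFamily T where
  isWeaklyRegularFamily := .of_exact hT hφ hψ hex hφT hψT hT'.isWeaklyRegularFamily hT''
  rangeSup_univ_ne_top htop := by
    refine hT'.rangeSup_univ_ne_top (Submodule.eq_top_iff'.2 fun z => ?_)
    exact hT''.mem_rangeSup_of_map_mem hT hφ hψ hex hφT hψT Set.finite_univ isLowerSet_univ
      (htop ▸ Submodule.mem_top)

end Extension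

theorem mem_rangeSup_mapRange {σ : Type*} {x : σ →₀ M} :
    x ∈ rangeSup (fun i => Finsupp.mapRange.linearMap (T i)) s ↔ ∀ a, x a ∈ rangeSup T s := by
  refine ⟨fun hx a => map_mem_rangeSup (ψ := Finsupp.lapply a) (fun _ _ => rfl) hx, fun hx => ?_⟩
  rw [← Finsupp.sum_single x]
  refine Submodule.sum_mem _ fun a _ => map_mem_rangeSup (ψ := Finsupp.lsingle a) ?_ (hx a)
  exact fun i y => (Finsupp.mapRange_single (hf := map_zero (T i))).symm

theorem IsWeaklyRegularFamily.mapRange [Preorder ι] (hT : IsWeaklyRegularFamily T) (σ : Type*) :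
    IsWeaklyRegularFamily fun i => Finsupp.mapRange.linearMap (α := σ) (T i) := by
  intro i x hx
  rw [mem_rangeSup_mapRange] at hx ⊢
  exact fun a => hT i (x a) (hx a)

theorem IsRegularFamily.mapRange [Preorder ι] (hT : IsRegularFamily T) (σ : Type*) [Nonempty σ] :
    IsRegularFamily fun i => Finsupp.mapRange.linearMap (α := σ) (T i) where
  isWeaklyRegularFamily := hT.isWeaklyRegularFamily.mapRange σ
  rangeSup_univ_ne_top htop := by
    refine hT.rangeSup_univ_ne_top (Submodule.eq_top_iff'.2 fun m => ?_)
    obtain ⟨a⟩ := ‹Nonempty σ›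
    simpa using mem_rangeSup_mapRange.1 (htop ▸ Submodule.mem_top : Finsupp.single a m ∈ _) a

theorem rangeSup_toSpanSingleton (g : ι → A) :
    rangeSup (fun i => LinearMap.toSpanSingleton A A (g i)) s = Ideal.span (g '' s) := by
  rw [Ideal.span, ← Set.biUnion_of_singleton (g '' s), Set.biUnion_image, Submodule.span_iUnion₂]
  simp only [rangeSup, LinearMap.range_toSpanSingleton]

end RegularFamily

section OrderFiltration

variable {R : Type*} [CommRing R] {r k : ℕ} {f : Fin r → R}

/-- The multi-index `β - e_i`, or `β` itself when `β_i = 0`. -/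
def Idx.lower (β : Idx r k) (i : Fin r) : Idx r k :=
  ⟨β.1 - Pi.single i 1, (Finset.sum_le_sum fun _ _ => Nat.sub_le _ _).trans β.2⟩

theorem Idx.sum_lower_lt {β : Idx r k} {i : Fin r} (hi : β.1 i ≠ 0) :
    ∑ j, (β.lower i).1 j < ∑ j, β.1 j := by
  refine Finset.sum_lt_sum (fun _ _ => Nat.sub_le _ _) ⟨i, Finset.mem_univ i, ?_⟩
  simpa [Idx.lower] using Nat.pos_of_ne_zero hi

theorem tOp_single (i : Fin r) (β : Idx r k) (a : R) :
    tOp R r f k i (single β a) = f i • single β a - β.1 i • single (β.lower i) a := by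
  simp [tOp, Idx.lower, smul_sub, mul_comm]

theorem commute_tOp (i j : Fin r) : Commute (tOp R r f k i) (tOp R r f k j) := by
  rcases eq_or_ne i j with rfl | hij
  · exact Commute.refl _
  refine Finsupp.lhom_ext fun β a => ?_
  have hlower : (β.lower i).lower j = (β.lower j).lower i := Subtype.ext tsub_right_comm
  have hcoord {i j : Fin r} (h : i ≠ j) : (β.lower i).1 j = β.1 j := by
    simp [Idx.lower, Pi.single_eq_of_ne h.symm]
  simp only [Module.End.mul_apply, tOp_single, map_sub, map_smul, map_nsmul, hlower,
    hcoord hij, hcoord hij.symm]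
  module

variable (R r k)

/-- The inclusion `F_k B_f → F_{k+1} B_f`. -/
def orderInclusion : Mk R r k →ₗ[R] Mk R r (k + 1) :=
  Finsupp.lmapDomain R R (Subtype.impEmbedding _ _ fun _ hβ => hβ.trans k.le_succ)

/-- The symbol map from `F_k B_f` to the graded piece `gr_k B_f`, modeled as the free `R`-module
with basis `{e_β : |β| = k}`. -/
def symbolMap : Mk R r k →ₗ[R] ({β : Fin r → ℕ // ∑ i, β i = k} →₀ R) :=
  Finsupp.lcomapDomain _ (Subtype.impEmbedding _ _ fun _ hβ => hβ.le).injective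

variable {R r k}

theorem orderInclusion_injective : Function.Injective (orderInclusion R r k) :=
  Finsupp.mapDomain_injective (Function.Embedding.injective _)

theorem symbolMap_surjective : Function.Surjective (symbolMap R r k) :=
  (Finsupp.leftInverse_lcomapDomain_mapDomain (R := R) _ _).surjective

theorem exact_orderInclusion_symbolMap :
    Function.Exact (orderInclusion R r k) (symbolMap R r (k + 1)) := by
  intro x
  refine Iff.trans ⟨fun hx γ hγ => ?_, fun hx => Finsupp.ext fun γ => hx _ ?_⟩
    (Finsupp.mem_range_mapDomain_iff _ (Function.Embedding.injective _) x).symm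
  · have hγk : ∑ i, γ.1 i = k + 1 :=
      γ.2.antisymm (Nat.lt_of_not_le fun hle => hγ ⟨⟨γ.1, hle⟩, rfl⟩)
    exact DFunLike.congr_fun hx ⟨γ.1, hγk⟩
  · rintro ⟨β, hβ⟩
    have hβγ : β.1 = γ.1 := congrArg Subtype.val hβ
    exact absurd β.2 (by rw [hβγ, γ.2]; exact k.not_succ_le_self)

theorem orderInclusion_tOp (i : Fin r) (x : Mk R r k) :
    orderInclusion R r k (tOp R r f k i x) = tOp R r f (k + 1) i (orderInclusion R r k x) := by
  suffices h : orderInclusion R r k ∘ₗ tOp R r f k i =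
      tOp R r f (k + 1) i ∘ₗ orderInclusion R r k from LinearMap.congr_fun h x
  refine Finsupp.lhom_ext fun β a => ?_
  simp only [orderInclusion, LinearMap.comp_apply, tOp_single, map_sub, map_smul, map_nsmul,
    Finsupp.lmapDomain_apply, Finsupp.mapDomain_single]
  rfl

theorem tOp_apply_of_sum_eq (i : Fin r) (x : Mk R r k) {γ : Idx r k} (hγ : ∑ j, γ.1 j = k) :
    tOp R r f k i x γ = x γ * f i := by
  suffices h : Finsupp.lapply γ ∘ₗ tOp R r f k i =
      LinearMap.toSpanSingleton R R (f i) ∘ₗ Finsupp.lapply γ from LinearMap.congr_fun h x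
  refine Finsupp.lhom_ext fun β a => ?_
  have hcorr : β.1 i • single (β.lower i) a γ = 0 := by
    by_cases hi : β.1 i = 0
    · rw [hi, zero_smul]
    · have hlt : ∑ j, (β.lower i).1 j < ∑ j, γ.1 j :=
        ((Idx.sum_lower_lt hi).trans_le β.2).trans_eq hγ.symm
      rw [Finsupp.single_eq_of_ne (fun h => hlt.ne (by rw [h])), smul_zero]
  simp only [LinearMap.comp_apply, tOp_single, Finsupp.lapply_apply, Finsupp.sub_apply,
    Finsupp.smul_apply, hcorr, sub_zero, LinearMap.toSpanSingleton_apply, smul_eq_mul, mul_comm]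

theorem symbolMap_tOp (i : Fin r) (x : Mk R r k) :
    symbolMap R r k (tOp R r f k i x) =
      Finsupp.mapRange.linearMap (LinearMap.toSpanSingleton R R (f i)) (symbolMap R r k x) :=
  Finsupp.ext fun γ => tOp_apply_of_sum_eq i x γ.2

theorem tOp_zero_eq (i : Fin r) :
    tOp R r f 0 i = Finsupp.mapRange.linearMap (LinearMap.toSpanSingleton R R (f i)) :=
  LinearMap.ext fun x => Finsupp.ext fun γ => tOp_apply_of_sum_eq i x (Nat.le_zero.1 γ.2)

theorem isRegularFamily_tOp (hf : IsRegularFamily fun i => LinearMap.toSpanSingleton R R (f i))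
    (k : ℕ) : IsRegularFamily (tOp R r f k) := by
  induction k with
  | zero =>
    have : Nonempty (Idx r 0) := ⟨0, by simp⟩
    rw [funext tOp_zero_eq]
    exact hf.mapRange _
  | succ k ih =>
    exact ih.of_exact commute_tOp orderInclusion_injective symbolMap_surjective
      exact_orderInclusion_symbolMap orderInclusion_tOp symbolMap_tOp
      (hf.isWeaklyRegularFamily.mapRange _)

end OrderFiltration

/-- Lemma 6.3: if `f₁,…,f_r` is a regular sequence in `R`, then for every `k ≥ 0` the
sequence `t₁,…,t_r` is a regular sequence on `M_k = F_k B_f`: each `t_i` is injective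
modulo `(t₁,…,t_{i-1}) M_k`, and `(t₁,…,t_r) M_k ≠ M_k`. -/
theorem t_regular_on_Mk
    (hreg : ∀ i : Fin r, ∀ x : R,
      f i * x ∈ Ideal.span (f '' {j | j < i}) → x ∈ Ideal.span (f '' {j | j < i}))
    (hne : Ideal.span (Set.range f) ≠ ⊤) :
    ∀ k : ℕ,
      (∀ i : Fin r, ∀ x : Mk R r k,
        tOp R r f k i x ∈ partialImage R r f k i → x ∈ partialImage R r f k i) ∧
      (⨆ j : Fin r, LinearMap.range (tOp R r f k j)) ≠ ⊤ := by
  intro k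
  have hf : IsRegularFamily fun i => LinearMap.toSpanSingleton R R (f i) := by
    refine ⟨fun i x => ?_, ?_⟩
    · rw [rangeSup_toSpanSingleton, LinearMap.toSpanSingleton_apply, smul_eq_mul, mul_comm]
      exact hreg i x
    · rwa [rangeSup_toSpanSingleton, Set.image_univ]
  obtain ⟨hweak, hne_top⟩ := isRegularFamily_tOp hf k
  refine ⟨hweak, ?_⟩
  rwa [rangeSup, iSup_univ] at hne_top

end
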